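/- Let w = w(x_1, …, x_k) be a word and let w'(x_1, …, x_{k+1}) = [w(x_1, …, x_k), x_{k+1}]. If w is good, then w' is good. -/

import Mathlib

open scoped Classical

/-- The commutator `[x, y] = x⁻¹y⁻¹xy` (the convention used in the paper). -/
def pcomm {G : Type*} [Group G] (x y : G) : G := x⁻¹ * y⁻¹ * x * y

/-- The left-normed commutator word `w_k = [x₁, …, x_k] ∈ F_k`,
defined inductively by `w₁ = x₁` and `w_{j+1} = [w_j, x_{j+1}]`. -/
def commWord : (k : ℕ) → FreeGroup (Fin k)
  | 0 => 1
  | 1 => FreeGroup.of 0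
  | (k + 2) =>
      pcomm (FreeGroup.map Fin.castSucc (commWord (k + 1))) (FreeGroup.of (Fin.last (k + 1)))

/-- The left-normed commutator `[g₁, …, g_k]` of group elements. -/
def commElt {G : Type*} [Group G] : {k : ℕ} → (Fin k → G) → G
  | 0, _ => 1
  | 1, f => f 0
  | (_ + 2), f => pcomm (commElt (fun i => f i.castSucc)) (f (Fin.last _))

/-- The word `[x₁², x₂, …, x_k] ∈ F_k`, defined inductively by
`u₁ = x₁²` and `u_{j+1} = [u_j, x_{j+1}]`. -/
def sqCommWord : (k : ℕ) → FreeGroup (Fin k)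
  | 0 => 1
  | 1 => FreeGroup.of 0 ^ 2
  | (k + 2) =>
      pcomm (FreeGroup.map Fin.castSucc (sqCommWord (k + 1))) (FreeGroup.of (Fin.last (k + 1)))

/-- `P_{G,w}(g) = |w_G⁻¹(g)| / |G|^k`, the probability that the word map of `w`
takes the value `g` on a uniformly random `k`-tuple. -/
noncomputable def wordProb {k : ℕ} {G : Type*} [Group G] (w : FreeGroup (Fin k)) (g : G) : ℝ :=
  (Nat.card {f : Fin k → G // FreeGroup.lift f w = g} : ℝ) / (Nat.card G : ℝ) ^ k

/-- A group is residually finite if every nontrivial element is excluded by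
some normal subgroup of finite index. -/
def ResiduallyFinite (Γ : Type*) [Group Γ] : Prop :=
  ∀ g : Γ, g ≠ 1 → ∃ Δ : Subgroup Γ, Δ.Normal ∧ Δ.FiniteIndex ∧ g ∉ Δ

/-- A word `w ≠ 1` is a probabilistic identity of `Γ` if for some `ε > 0` every
finite quotient `H` of `Γ` satisfies `P_{H,w}(1) ≥ ε`. -/
def IsProbIdentity {k : ℕ} (Γ : Type*) [Group Γ] (w : FreeGroup (Fin k)) : Prop :=
  w ≠ 1 ∧ ∃ ε : ℝ, 0 < ε ∧
    ∀ (Δ : Subgroup Γ) [Δ.Normal], Δ.FiniteIndex → ε ≤ wordProb w (1 : Γ ⧸ Δ)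

/-- `G(H)`: the intersection of the kernels of all homomorphisms from `G` to `H`. -/
def kerInt (G H : Type*) [Group G] [Group H] : Subgroup G := ⨅ φ : G →* H, φ.ker

/-- A word `1 ≠ w ∈ F_k` is good if for every `ε > 0` there is a word `1 ≠ v ∈ F_m`,
depending only on `w` and `ε`, which is an identity of every finite group `G`
satisfying `P_{G,w}(g) ≥ ε` for some `g ∈ G`. -/
def IsGood {k : ℕ} (w : FreeGroup (Fin k)) : Prop :=
  w ≠ 1 ∧ ∀ ε : ℝ, 0 < ε → ∃ (m : ℕ) (v : FreeGroup (Fin m)), v ≠ 1 ∧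
    ∀ (G : Type) [Group G] [Finite G],
      (∃ g : G, ε ≤ wordProb w g) → ∀ f : Fin m → G, FreeGroup.lift f v = 1

theorem aux_ne {k : ℕ} (w : FreeGroup (Fin k)) (hw : w ≠ 1) (n : ℕ) (hn : n ≠ 0) :
    pcomm (FreeGroup.map Fin.castSucc w) (FreeGroup.of (Fin.last k) ^ n) ≠ 1 := by
  intro h
  let y : Equiv.Perm (FreeGroup (Fin k) × ℤ) :=
    { toFun := fun p => (p.1, p.2 + if p.1 = w then 1 else 0)
      invFun := fun p => (p.1, p.2 - if p.1 = w then 1 else 0)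
      left_inv := fun p => by simp
      right_inv := fun p => by simp }
  have hy : ∀ (n : ℕ) (p : FreeGroup (Fin k) × ℤ),
      (y ^ n) p = (p.1, p.2 + n * if p.1 = w then 1 else 0) := by
    intro n
    induction n with
    | zero => intro p; simp
    | succ n ih =>
      intro p
      rw [pow_succ', Equiv.Perm.mul_apply, ih]
      show (_, _) = _
      ext
      · rfl
      · push_cast
        ring
  let a : Fin k → Equiv.Perm (FreeGroup (Fin k) × ℤ) := fun i =>
    { toFun := fun p => (FreeGroup.of i * p.1, p.2)
      invFun := fun p => ((FreeGroup.of i)⁻¹ * p.1, p.2)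
      left_inv := fun p => by simp
      right_inv := fun p => by simp }
  have ha : ∀ (u : FreeGroup (Fin k)) (p : FreeGroup (Fin k) × ℤ),
      (FreeGroup.lift a u) p = (u * p.1, p.2) := by
    intro u
    induction u using FreeGroup.induction_on with
    | C1 => intro p; simp
    | of i => intro p; simp [a]
    | inv_of i ih =>
      intro p
      rw [map_inv, Equiv.Perm.inv_eq_iff_eq, ih]
      simp
    | mul x z hx hz => intro p; rw [map_mul, Equiv.Perm.mul_apply, hz, hx, mul_assoc]
  let φ : FreeGroup (Fin (k + 1)) →* Equiv.Perm (FreeGroup (Fin k) × ℤ) :=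
    FreeGroup.lift (Fin.snoc (α := fun _ => Equiv.Perm (FreeGroup (Fin k) × ℤ)) a y)
  have h1 : φ (FreeGroup.of (Fin.last k)) = y := by simp [φ]
  have h2 : φ (FreeGroup.map Fin.castSucc w) = FreeGroup.lift a w := by
    have : φ.comp (FreeGroup.map Fin.castSucc) = FreeGroup.lift a := by
      ext1 i
      simp [φ]
    rw [← this]; rfl
  have h3 := congrArg φ h
  simp only [pcomm, map_mul, map_inv, map_pow, h1, h2, map_one] at h3
  have h4 : FreeGroup.lift a w * y ^ n = y ^ n * FreeGroup.lift a w := by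
    have := congrArg (fun t => y ^ n * FreeGroup.lift a w * t) h3
    simpa [mul_assoc] using this
  have h5 := congrArg (fun t : Equiv.Perm (FreeGroup (Fin k) × ℤ) => t (1, 0)) h4
  simp only [Equiv.Perm.mul_apply, ha, hy, mul_one, if_neg hw.symm] at h5
  simp at h5
  exact hn (by exact_mod_cast h5.symm)

theorem aux_lift {k : ℕ} {G : Type} [Group G] (w : FreeGroup (Fin k)) (n : ℕ)
    (F : Fin (k + 1) → G) :
    FreeGroup.lift F (pcomm (FreeGroup.map Fin.castSucc w) (FreeGroup.of (Fin.last k) ^ n))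
      = pcomm (FreeGroup.lift (fun i => F i.castSucc) w) (F (Fin.last k) ^ n) := by
  have h2 : FreeGroup.lift F (FreeGroup.map Fin.castSucc w) =
      FreeGroup.lift (fun i => F i.castSucc) w := by
    have : (FreeGroup.lift F).comp (FreeGroup.map Fin.castSucc) =
        FreeGroup.lift (fun i => F i.castSucc) := by
      ext1 i
      simp
    rw [← this]; rfl
  simp [pcomm, h2]

/-- The centralizer of all `n`-th powers. -/
def powCent (G : Type) [Group G] (n : ℕ) : Subgroup G :=
  Subgroup.centralizer (Set.range fun z : G => z ^ n)

theorem mem_powCent {G : Type} [Group G] {n : ℕ} {g : G} :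
    g ∈ powCent G n ↔ ∀ z : G, z ^ n * g = g * z ^ n := by
  simp [powCent, Subgroup.mem_centralizer_iff]

instance powCent_normal (G : Type) [Group G] (n : ℕ) : (powCent G n).Normal := by
  constructor
  intro g hg c
  rw [mem_powCent] at *
  intro z
  have h := hg (c⁻¹ * z * c)
  have e : (c⁻¹ * z * c) ^ n = c⁻¹ * z ^ n * c := by
    have := conj_pow (i := n) (a := c⁻¹) (b := z)
    simpa using this
  rw [e] at h
  have h' := congrArg (fun t => c * t * c⁻¹) h
  simpa [mul_assoc] using h'

theorem lift_mk {k : ℕ} {G : Type} [Group G] (K : Subgroup G) [K.Normal] (w : FreeGroup (Fin k))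
    (f : Fin k → G) :
    FreeGroup.lift (fun i => (f i : G ⧸ K)) w = ((FreeGroup.lift f w : G) : G ⧸ K) := by
  have : (QuotientGroup.mk' K).comp (FreeGroup.lift f) =
      FreeGroup.lift (fun i => (f i : G ⧸ K)) := by
    ext1 i
    simp
  rw [← this]; rfl

theorem card_le_quot {k : ℕ} {G : Type} [Group G] [Finite G] (K : Subgroup G) [K.Normal]
    (w : FreeGroup (Fin k)) :
    Nat.card {f : Fin k → G // FreeGroup.lift f w ∈ K} ≤
      Nat.card {f : Fin k → G ⧸ K // FreeGroup.lift f w = 1} * Nat.card K ^ k := by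
  have e : Nat.card K ^ k = Nat.card (Fin k → K) := by simp [Nat.card_fun]
  rw [e, ← Nat.card_prod]
  let φ : {f : Fin k → G // FreeGroup.lift f w ∈ K} →
      {f : Fin k → G ⧸ K // FreeGroup.lift f w = 1} × (Fin k → K) := fun f =>
    (⟨fun i => (f.1 i : G ⧸ K), by rw [lift_mk]; exact (QuotientGroup.eq_one_iff _).2 f.2⟩,
      fun i => ⟨(Quotient.out (f.1 i : G ⧸ K))⁻¹ * f.1 i, by
        rw [← QuotientGroup.eq]; exact QuotientGroup.out_eq' _⟩)
  apply Nat.card_le_card_of_injective φ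
  intro f g h
  apply Subtype.ext
  funext i
  have h1 : (f.1 i : G ⧸ K) = (g.1 i : G ⧸ K) := congrFun (congrArg (fun t => t.1.1) h) i
  have h2 : (Quotient.out (f.1 i : G ⧸ K))⁻¹ * f.1 i = (Quotient.out (g.1 i : G ⧸ K))⁻¹ * g.1 i :=
    congrArg Subtype.val (congrFun (congrArg (fun t => t.2) h) i)
  rw [h1] at h2
  exact mul_left_cancel h2

theorem card_pcomm_le {G : Type} [Group G] [Finite G] (a g : G) :
    Nat.card {y : G // pcomm a y = g} ≤ Nat.card (Subgroup.centralizer {a}) := by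
  by_cases hne : ∃ y0 : G, pcomm a y0 = g
  · obtain ⟨y0, hy0⟩ := hne
    let φ : {y : G // pcomm a y = g} → Subgroup.centralizer {a} := fun y =>
      ⟨y.1 * y0⁻¹, by
        rw [Subgroup.mem_centralizer_singleton_iff]
        have h := y.2.trans hy0.symm
        simp only [pcomm, mul_assoc, mul_right_inj] at h
        have h' := congrArg (fun t => y.1 * t * y0⁻¹) h
        simp only [mul_assoc, mul_inv_cancel_left, mul_inv_cancel, mul_one] at h' ⊢
        first | exact h' | exact h'.symm⟩
    apply Nat.card_le_card_of_injective φ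
    intro y z h
    exact Subtype.ext (mul_right_cancel (congrArg Subtype.val h))
  · have : IsEmpty {y : G // pcomm a y = g} := ⟨fun y => hne ⟨y.1, y.2⟩⟩
    simp

theorem index_gt {G : Type} [Group G] [Finite G] (N : ℕ) (a : G)
    (ha : a ∉ powCent G N.factorial) : N < (Subgroup.centralizer {a}).index := by
  by_contra hlt
  push Not at hlt
  apply ha
  rw [mem_powCent]
  intro z
  obtain ⟨i, hi0, hi, hz⟩ := Subgroup.exists_pow_mem_of_index_ne_zero
    (H := Subgroup.centralizer {a}) Subgroup.FiniteIndex.index_ne_zero z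
  obtain ⟨c, hc⟩ := Nat.dvd_factorial hi0 (hi.trans hlt)
  have := Subgroup.pow_mem _ hz c
  rw [← pow_mul, ← hc, Subgroup.mem_centralizer_singleton_iff] at this
  exact this

theorem quot_prob {k : ℕ} {G : Type} [Group G] [Finite G] (w : FreeGroup (Fin k)) (ε : ℝ)
    (N : ℕ) (hN : 0 < N) (hNε : 2 / ε ≤ N) (hε : 0 < ε) (g : G)
    (h : ε ≤ wordProb (pcomm (FreeGroup.map Fin.castSucc w) (FreeGroup.of (Fin.last k))) g) :
    ε / 2 ≤ wordProb w (1 : G ⧸ powCent G N.factorial) := by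
  have := Fintype.ofFinite G
  set K := powCent G N.factorial with hK
  have hG : (0 : ℝ) < Nat.card G := by exact_mod_cast Nat.card_pos
  have hKp : (0 : ℝ) < Nat.card K := by exact_mod_cast Nat.card_pos
  have hQp : (0 : ℝ) < Nat.card (G ⧸ K) := by exact_mod_cast Nat.card_pos
  have hGe : (Nat.card G : ℝ) = Nat.card (G ⧸ K) * Nat.card K := by
    exact_mod_cast Subgroup.card_eq_card_quotient_mul_card_subgroup K
  unfold wordProb at h ⊢
  rw [le_div_iff₀ (by positivity)] at h ⊢
  have hcard : Nat.card {f : Fin (k + 1) → G // FreeGroup.lift f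
      (pcomm (FreeGroup.map Fin.castSucc w) (FreeGroup.of (Fin.last k))) = g} ≤
      ∑ x : Fin k → G, Nat.card {y : G // pcomm (FreeGroup.lift x w) y = g} := by
    rw [← Nat.card_sigma]
    let φ : {f : Fin (k + 1) → G // FreeGroup.lift f
      (pcomm (FreeGroup.map Fin.castSucc w) (FreeGroup.of (Fin.last k))) = g} →
      (Σ x : Fin k → G, {y : G // pcomm (FreeGroup.lift x w) y = g}) := fun f =>
      ⟨fun i => f.1 i.castSucc, ⟨f.1 (Fin.last k), by
        have h1 := aux_lift w 1 f.1
        rw [pow_one, pow_one] at h1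
        rw [← h1]; exact f.2⟩⟩
    apply Nat.card_le_card_of_injective φ
    intro a b hab
    apply Subtype.ext
    funext i
    refine Fin.lastCases ?_ (fun i => ?_) i
    · exact congrArg (fun t : (Σ x : Fin k → G, {y : G // pcomm (FreeGroup.lift x w) y = g}) =>
        t.2.1) hab
    · exact congrFun (congrArg (fun t : (Σ x : Fin k → G,
        {y : G // pcomm (FreeGroup.lift x w) y = g}) => t.1) hab) i
  have hterm : ∀ x : Fin k → G, (Nat.card {y : G // pcomm (FreeGroup.lift x w) y = g} : ℝ) ≤
      (if FreeGroup.lift x w ∈ K then (Nat.card G : ℝ) else 0) + ε / 2 * Nat.card G := by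
    intro x
    split_ifs with hx
    · have h1 : Nat.card {y : G // pcomm (FreeGroup.lift x w) y = g} ≤ Nat.card G :=
        Nat.card_le_card_of_injective Subtype.val Subtype.val_injective
      have h2 : (Nat.card {y : G // pcomm (FreeGroup.lift x w) y = g} : ℝ) ≤ Nat.card G := by
        exact_mod_cast h1
      have : 0 ≤ ε / 2 * (Nat.card G : ℝ) := by positivity
      linarith
    · have h1 : (Nat.card {y : G // pcomm (FreeGroup.lift x w) y = g} : ℝ) ≤
          Nat.card (Subgroup.centralizer {FreeGroup.lift x w}) := by
        exact_mod_cast card_pcomm_le _ g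
      have h2 : (N : ℝ) ≤ (Subgroup.centralizer {FreeGroup.lift x w}).index := by
        exact_mod_cast (index_gt N _ hx).le
      have h3 : (Nat.card (Subgroup.centralizer {FreeGroup.lift x w}) : ℝ) *
          (Subgroup.centralizer {FreeGroup.lift x w}).index = Nat.card G := by
        exact_mod_cast Subgroup.card_mul_index _
      set c : ℝ := (Nat.card (Subgroup.centralizer {FreeGroup.lift x w}) : ℝ)
      have hc : 0 ≤ c := Nat.cast_nonneg _
      have h4 : c * (2 / ε) ≤ Nat.card G := by
        rw [← h3]; exact mul_le_mul_of_nonneg_left (hNε.trans h2) hc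
      have h5 : c = ε / 2 * (c * (2 / ε)) := by field_simp
      have h6 : ε / 2 * (c * (2 / ε)) ≤ ε / 2 * Nat.card G :=
        mul_le_mul_of_nonneg_left h4 (by positivity)
      linarith
  have hB : (∑ x : Fin k → G, (if FreeGroup.lift x w ∈ K then (Nat.card G : ℝ) else 0)) =
      Nat.card {f : Fin k → G // FreeGroup.lift f w ∈ K} * Nat.card G := by
    rw [← Finset.sum_filter, Finset.sum_const, nsmul_eq_mul, Nat.card_eq_fintype_card
      (α := {f : Fin k → G // FreeGroup.lift f w ∈ K}), Fintype.card_subtype]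
  have hcard' : (Nat.card {f : Fin (k + 1) → G // FreeGroup.lift f
      (pcomm (FreeGroup.map Fin.castSucc w) (FreeGroup.of (Fin.last k))) = g} : ℝ) ≤
      ∑ x : Fin k → G, (Nat.card {y : G // pcomm (FreeGroup.lift x w) y = g} : ℝ) := by
    exact_mod_cast hcard
  have hsum := hcard'.trans (Finset.sum_le_sum fun x _ => hterm x)
  rw [Finset.sum_add_distrib, hB, Finset.sum_const, nsmul_eq_mul] at hsum
  have hn : ((Finset.univ : Finset (Fin k → G)).card : ℝ) = (Nat.card G : ℝ) ^ k := by
    simp [Finset.card_univ]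
  rw [hn] at hsum
  have hfin : ε / 2 * (Nat.card G : ℝ) ^ k ≤
      Nat.card {f : Fin k → G // FreeGroup.lift f w ∈ K} := by
    refine le_of_mul_le_mul_right ?_ hG
    have := h.trans hsum
    rw [pow_succ] at this
    linarith
  have hq : (Nat.card {f : Fin k → G // FreeGroup.lift f w ∈ K} : ℝ) ≤
      Nat.card {f : Fin k → G ⧸ K // FreeGroup.lift f w = 1} * (Nat.card K : ℝ) ^ k := by
    exact_mod_cast card_le_quot K w
  have := hfin.trans hq
  rw [hGe, mul_pow, ← mul_assoc] at this
  exact le_of_mul_le_mul_right this (by positivity)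

/-- If `w(x₁, …, x_k)` is good then so is
`w'(x₁, …, x_{k+1}) = [w(x₁, …, x_k), x_{k+1}]`. -/
theorem stmt7 (k : ℕ) (w : FreeGroup (Fin k)) (hw : IsGood w) :
    IsGood (pcomm (FreeGroup.map Fin.castSucc w) (FreeGroup.of (Fin.last k))) := by
  refine ⟨by simpa using aux_ne w hw.1 1 one_ne_zero, ?_⟩
  intro ε hε
  obtain ⟨m, v, hv, H⟩ := hw.2 (ε / 2) (by positivity)
  obtain ⟨N, hN⟩ := exists_nat_ge (2 / ε)
  have hN0 : 0 < N := by
    have : (0 : ℝ) < N := lt_of_lt_of_le (by positivity) hN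
    exact_mod_cast this
  refine ⟨m + 1, _, aux_ne v hv N.factorial (Nat.factorial_ne_zero N), ?_⟩
  intro G _ _ hg f
  obtain ⟨g, hg⟩ := hg
  have h1 := H (G ⧸ powCent G N.factorial) ⟨1, quot_prob w ε N hN0 hN hε g hg⟩
    (fun i => (f i.castSucc : G ⧸ powCent G N.factorial))
  rw [lift_mk, QuotientGroup.eq_one_iff, mem_powCent] at h1
  rw [aux_lift, pcomm, mul_assoc, ← h1 (f (Fin.last m))]
  group
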